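/- Let s, w, t ∈ ℂ with Re s > 3/2, Re w > 1 and Re t > 0. Define B_±(s,w;t) := (1/2)·Σ_{n ≥ 1, n ≡ ±1 (mod 4)} Σ_{k ≥ 1} τ(χ⁽⁴ⁿ⁾, k) · a_t(4n) · ψ₂(n) / (n^{s+1/2}·k^{w}) and, for Dirichlet characters ψ, ψ′, B(s,w;t,ψ,ψ′) := Σ_{n odd ≥ 1} Σ_{k ≥ 1} G((·/n),k) · a_t(n) · ψ(n) · ψ′(k) / (n^{s+1/2}·k^{w}), all these double series converging absolutely. Then B_±(s,w;t) = (ε_± · a_t(2)/(2·4^{w})) · ( B(s,w;t,ψ₂,ψ₀) ± B(s,w;t,ψ₋₂,ψ₀) ) − (ε_± · a_t(2)/(2·2^{w})) · ( B(s,w;t,ψ₁,ψ₁) ± B(s,w;t,ψ₋₁,ψ₁) ), where ε₊ = 1 and ε₋ = i. -/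

import Mathlib

open Complex

noncomputable section

/-- Gauss sum `τ((·/n),k)` of the Jacobi-symbol character mod `n` (`n` odd). -/
def jacobiTau (n k : ℕ) : ℂ :=
  ∑ j ∈ Finset.range n, ((jacobiSym (j : ℤ) n : ℤ) : ℂ) *
    Complex.exp (2 * Real.pi * Complex.I * j * k / n)

/-- Modified Gauss sum `G((·/n),k) = ((1-i)/2 + (-1|n)(1+i)/2) τ((·/n),k)`. -/
def jacobiG (n k : ℕ) : ℂ :=
  ((1 - Complex.I) / 2 + ((jacobiSym (-1 : ℤ) n : ℤ) : ℂ) * (1 + Complex.I) / 2) * jacobiTau n k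

/-- Gauss sum `τ(χ⁽⁴ⁿ⁾,k)` of the Kronecker character `(·/4n)` (`n` odd), whose value at odd `j`
is the Jacobi symbol `(j|n)` and `0` at even `j`. -/
def tau4n (n k : ℕ) : ℂ :=
  ∑ j ∈ Finset.range (4 * n), (if Odd j then ((jacobiSym (j : ℤ) n : ℤ) : ℂ) else 0) *
    Complex.exp (2 * Real.pi * Complex.I * j * k / (4 * n))

/-- `a_t(m) = ∏_{p | m} (1 - p^{-t})^{-1}`. -/
def aF (t : ℂ) (m : ℕ) : ℂ := ∏ p ∈ m.primeFactors, (1 - (p : ℂ) ^ (-t))⁻¹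

/-- The trivial character `ψ₀ = 1`. -/
def psi0 : ℕ → ℂ := fun _ => 1

/-- The principal character mod 4. -/
def psi1 : ℕ → ℂ := fun n => if Odd n then 1 else 0

/-- The non-principal character mod 4 (`χ₄`). -/
def psim1 : ℕ → ℂ := fun n => ((ZMod.χ₄ (n : ZMod 4) : ℤ) : ℂ)

/-- The primitive quadratic character `χ₈` mod 8. -/
def psi2 : ℕ → ℂ := fun n => ((ZMod.χ₈ (n : ZMod 8) : ℤ) : ℂ)

/-- The primitive quadratic character `χ₈'` mod 8. -/
def psim2 : ℕ → ℂ := fun n => ((ZMod.χ₈' (n : ZMod 8) : ℤ) : ℂ)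

/-- The double Dirichlet series `B(s,w;t,ψ,ψ')` with modified Gauss sum coefficients. -/
def Bgen (s w t : ℂ) (ψ ψ' : ℕ → ℂ) : ℂ :=
  ∑' q : ℕ × ℕ, if Odd q.1 ∧ 1 ≤ q.2 then
    jacobiG q.1 q.2 * aF t q.1 * ψ q.1 * ψ' q.2 / ((q.1 : ℂ) ^ (s + 1 / 2) * (q.2 : ℂ) ^ w)
  else 0

/-- The double Dirichlet series `B_±(s,w;t)`, where `r = 1` resp. `r = 3` selects the
summands with `n ≡ ±1 (mod 4)`. -/
def Bpm (r : ℕ) (s w t : ℂ) : ℂ :=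
  (1 / 2) * ∑' q : ℕ × ℕ, if q.1 % 4 = r ∧ 1 ≤ q.2 then
    tau4n q.1 q.2 * aF t (4 * q.1) * psi2 q.1 / ((q.1 : ℂ) ^ (s + 1 / 2) * (q.2 : ℂ) ^ w)
  else 0

lemma aux_perm (n u : ℕ) (hu : Nat.Coprime u n) (F : ℕ → ℂ) (hF : ∀ j, F (j % n) = F j) :
    ∑ j ∈ Finset.range n, F (u * j) = ∑ j ∈ Finset.range n, F j := by
  rcases Nat.eq_zero_or_pos n with rfl | hn
  · simp
  have hmaps : ∀ j ∈ Finset.range n, u * j % n ∈ Finset.range n := fun j _ =>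
    Finset.mem_range.2 (Nat.mod_lt _ hn)
  have hinj : Set.InjOn (fun j => u * j % n) (Finset.range n : Set ℕ) := by
    intro a ha b hb h
    have ha' : a < n := by simpa using ha
    have hb' : b < n := by simpa using hb
    have h1 : u * a ≡ u * b [MOD n] := h
    have h2 := Nat.ModEq.cancel_left_of_coprime (by rw [Nat.gcd_comm]; exact hu) h1
    have h3 : a % n = b % n := h2
    rwa [Nat.mod_eq_of_lt ha', Nat.mod_eq_of_lt hb'] at h3
  refine Finset.sum_nbij (fun j => u * j % n) hmaps hinj ?_ ?_
  · exact Finset.surjOn_of_injOn_of_card_le _ hmaps hinj le_rfl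
  · intro j _
    exact (hF _).symm

lemma aux_crt (n : ℕ) (hn : Odd n) (F : ℕ → ℂ) (hF : ∀ j, F (j % (4 * n)) = F j) :
    ∑ j ∈ Finset.range (4 * n), F j
      = ∑ a ∈ Finset.range n, ∑ b ∈ Finset.range 4, F (4 * a + n * b) := by
  have hn0 : 0 < n := hn.pos
  have hc : Nat.Coprime 4 n := by
    have : Nat.Coprime (2 ^ 2) n := Nat.Coprime.pow_left 2 (Nat.coprime_two_left.2 hn)
    simpa using this
  rw [← Finset.sum_product']
  symm
  have hmaps : ∀ q ∈ Finset.range n ×ˢ Finset.range 4,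
      (4 * q.1 + n * q.2) % (4 * n) ∈ Finset.range (4 * n) := fun j _ =>
    Finset.mem_range.2 (Nat.mod_lt _ (by omega))
  have hinj : Set.InjOn (fun q : ℕ × ℕ => (4 * q.1 + n * q.2) % (4 * n))
      (Finset.range n ×ˢ Finset.range 4 : Finset (ℕ × ℕ)) := by
    rintro ⟨a, b⟩ ha ⟨a', b'⟩ hb h
    have ha' : a < n ∧ b < 4 := by simpa using ha
    have hb' : a' < n ∧ b' < 4 := by simpa using hb
    have h1 : 4 * a + n * b ≡ 4 * a' + n * b' [MOD 4 * n] := h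
    have h2 : 4 * a + n * b ≡ 4 * a' + n * b' [MOD n] := h1.of_dvd (Dvd.intro_left 4 rfl)
    have h3 : 4 * a + n * b ≡ 4 * a' + n * b' [MOD 4] := h1.of_dvd (Dvd.intro n rfl)
    have h4 : 4 * a ≡ 4 * a' [MOD n] := by
      simpa [Nat.ModEq] using h2
    have h5 : n * b ≡ n * b' [MOD 4] := by
      simpa [Nat.ModEq] using h3
    have h6 : a % n = a' % n :=
      Nat.ModEq.cancel_left_of_coprime (by rw [Nat.gcd_comm]; exact hc) h4
    have h7 : b % 4 = b' % 4 := Nat.ModEq.cancel_left_of_coprime hc h5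
    rw [Nat.mod_eq_of_lt ha'.1, Nat.mod_eq_of_lt hb'.1] at h6
    rw [Nat.mod_eq_of_lt ha'.2, Nat.mod_eq_of_lt hb'.2] at h7
    rw [h6, h7]
  refine Finset.sum_nbij (fun q : ℕ × ℕ => (4 * q.1 + n * q.2) % (4 * n)) hmaps hinj ?_ ?_
  · refine Finset.surjOn_of_injOn_of_card_le _ hmaps hinj ?_
    simp [Finset.card_product, mul_comm]
  · intro j _
    exact (hF _).symm

lemma aux_exp (N k j : ℕ) (hN : N ≠ 0) :
    Complex.exp (2 * Real.pi * Complex.I * ((j % N : ℕ) : ℂ) * k / N)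
      = Complex.exp (2 * Real.pi * Complex.I * (j : ℂ) * k / N) := by
  have hN' : (N : ℂ) ≠ 0 := Nat.cast_ne_zero.2 hN
  rw [Complex.exp_eq_exp_iff_exists_int]
  have h : (j : ℂ) = N * (j / N : ℕ) + (j % N : ℕ) := by
    exact_mod_cast (Nat.div_add_mod j N).symm
  rw [h]
  generalize j / N = m
  generalize j % N = x
  refine ⟨-((m * k : ℕ) : ℤ), ?_⟩
  push_cast
  field_simp
  ring

lemma aux_jac_mod (n j : ℕ) : jacobiSym ((j % n : ℕ) : ℤ) n = jacobiSym (j : ℤ) n := by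
  rw [jacobiSym.mod_left (j : ℤ) n]
  simp

lemma aux_J2sq (n : ℕ) (hn : Odd n) : jacobiSym 2 n * jacobiSym 2 n = 1 := by
  have := jacobiSym.sq_one (a := 2) (b := n) (by
    have := Nat.coprime_two_left.2 hn
    simpa [Int.gcd] using this)
  rwa [sq] at this

lemma tau_two (n k : ℕ) (hn : Odd n) :
    jacobiTau n (2 * k) = ((jacobiSym 2 n : ℤ) : ℂ) * jacobiTau n k := by
  have h2 : ((jacobiSym 2 n : ℤ) : ℂ) * ((jacobiSym 2 n : ℤ) : ℂ) = 1 := by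
    exact_mod_cast aux_J2sq n hn
  have h := aux_perm n 2 (Nat.coprime_two_left.2 hn)
    (fun j => ((jacobiSym (j : ℤ) n : ℤ) : ℂ) *
      Complex.exp (2 * Real.pi * Complex.I * j * k / n)) (by
      intro j
      rw [aux_exp n k j hn.pos.ne', aux_jac_mod])
  unfold jacobiTau
  rw [← h, Finset.mul_sum]
  refine Finset.sum_congr rfl fun j _ => ?_
  have e : jacobiSym ((2 * j : ℕ) : ℤ) n = jacobiSym 2 n * jacobiSym (j : ℤ) n := by
    push_cast
    exact jacobiSym.mul_left _ _ _
  simp only [e]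
  push_cast
  rw [show (2 * Real.pi * Complex.I * (2 * (j:ℂ)) * k / n) =
    2 * Real.pi * Complex.I * (j:ℂ) * (2 * k) / n by ring]
  linear_combination (-((jacobiSym (j : ℤ) n : ℤ) : ℂ) *
    Complex.exp (2 * Real.pi * Complex.I * (j:ℂ) * (2 * k) / n)) * h2

lemma tau_four (n k : ℕ) (hn : Odd n) : jacobiTau n (4 * k) = jacobiTau n k := by
  have h2 : ((jacobiSym 2 n : ℤ) : ℂ) * ((jacobiSym 2 n : ℤ) : ℂ) = 1 := by
    exact_mod_cast aux_J2sq n hn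
  rw [show 4 * k = 2 * (2 * k) by ring, tau_two n _ hn, tau_two n _ hn, ← mul_assoc, h2, one_mul]

lemma tau4n_eq (n k : ℕ) (hn : Odd n) :
    tau4n n k = (Complex.I ^ k + (-Complex.I) ^ k) * jacobiTau n k := by
  have hn0 : (n : ℂ) ≠ 0 := Nat.cast_ne_zero.2 hn.pos.ne'
  unfold tau4n
  rw [aux_crt n hn (fun j => (if Odd j then ((jacobiSym (j : ℤ) n : ℤ) : ℂ) else 0) *
    Complex.exp (2 * Real.pi * Complex.I * j * k / (4 * n)))]
  · unfold jacobiTau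
    rw [Finset.mul_sum]
    refine Finset.sum_congr rfl fun a _ => ?_
    have o0 : ¬ Odd (4 * a + n * 0) := by rw [Nat.not_odd_iff]; omega
    have o1 : Odd (4 * a + n * 1) := by
      rw [Nat.odd_iff] at hn ⊢; omega
    have o2 : ¬ Odd (4 * a + n * 2) := by rw [Nat.not_odd_iff]; omega
    have o3 : Odd (4 * a + n * 3) := by
      rw [Nat.odd_iff] at hn ⊢; omega
    have hJ : ∀ b : ℕ, jacobiSym ((4 * a + n * b : ℕ) : ℤ) n = jacobiSym (a : ℤ) n := by
      intro b
      rw [← aux_jac_mod, Nat.add_mul_mod_self_left, aux_jac_mod]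
      rw [show ((4 * a : ℕ) : ℤ) = 2 * (2 * a) by push_cast; ring,
        jacobiSym.mul_left, jacobiSym.mul_left, ← mul_assoc, aux_J2sq n hn, one_mul]
    have hE : ∀ b : ℕ, Complex.exp (2 * Real.pi * Complex.I * ((4 * a + n * b : ℕ) : ℂ) * k / (4 * n))
        = (Complex.I ^ b) ^ k * Complex.exp (2 * Real.pi * Complex.I * a * k / n) := by
      intro b
      have : Complex.I = Complex.exp (Real.pi / 2 * Complex.I) := Complex.exp_pi_div_two_mul_I.symm
      have h2 : (Complex.I ^ b) ^ k = Complex.exp ((k : ℂ) * ((b : ℂ) * (Real.pi / 2 * Complex.I))) := by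
        rw [Complex.exp_nat_mul, Complex.exp_nat_mul, ← this]
      rw [h2, ← Complex.exp_add]
      congr 1
      push_cast
      field_simp
      ring
    simp only [Finset.sum_range_succ, Finset.sum_range_zero, if_neg o0, if_neg o2, if_pos o1,
      if_pos o3, hJ, hE]
    rw [show Complex.I ^ 3 = -Complex.I by rw [pow_succ, Complex.I_sq]; ring]
    ring
  · intro j
    have h1 : Odd (j % (4 * n)) ↔ Odd j := by
      rw [Nat.odd_iff, Nat.odd_iff, Nat.mod_mod_of_dvd j (by omega : 2 ∣ 4 * n)]
    have h2 : jacobiSym ((j % (4 * n) : ℕ) : ℤ) n = jacobiSym (j : ℤ) n := by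
      rw [← aux_jac_mod, Nat.mod_mod_of_dvd j (Dvd.intro_left 4 rfl), aux_jac_mod]
    have h3 := aux_exp (4 * n) k j (by have := hn.pos; omega)
    rw [Nat.cast_mul 4 n, Nat.cast_ofNat] at h3
    simp only [h1, h2, h3]

lemma tau4n_four (n k : ℕ) (hn : Odd n) : tau4n n (4 * k) = 2 * jacobiTau n k := by
  rw [tau4n_eq n _ hn, tau_four n k hn, pow_mul, pow_mul, Even.neg_pow (by decide), Complex.I_pow_four]
  norm_num

lemma tau4n_two (n k : ℕ) (hn : Odd n) (hk : Odd k) : tau4n n (2 * k) = -2 * psi2 n * jacobiTau n k := by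
  rw [tau4n_eq n _ hn, tau_two n k hn, pow_mul, pow_mul, neg_sq, Complex.I_sq, hk.neg_one_pow,
    jacobiSym.at_two hn]
  unfold psi2
  ring

lemma tau4n_odd (n k : ℕ) (hn : Odd n) (hk : Odd k) : tau4n n k = 0 := by
  rw [tau4n_eq n _ hn, hk.neg_pow]
  ring

lemma aF_four (t : ℂ) (n : ℕ) (hn : Odd n) : aF t (4 * n) = aF t 2 * aF t n := by
  have hc : Nat.Coprime 4 n := by
    have : Nat.Coprime (2 ^ 2) n := Nat.Coprime.pow_left 2 (Nat.coprime_two_left.2 hn)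
    simpa using this
  unfold aF
  rw [hc.primeFactors_mul, Finset.prod_union hc.disjoint_primeFactors,
    show Nat.primeFactors 4 = Nat.primeFactors 2 from by
      rw [show 4 = 2 ^ 2 by norm_num, Nat.primeFactors_pow _ (by norm_num)]]

lemma chars (n : ℕ) : (n % 4 = 1 → psi2 n * psi2 n = 1 ∧ psim2 n = psi2 n ∧ psim1 n = 1) ∧
    (n % 4 = 3 → psi2 n * psi2 n = 1 ∧ psim2 n = - psi2 n ∧ psim1 n = -1) := by
  have h8 : (n : ZMod 8) = ((n % 8 : ℕ) : ZMod 8) := (ZMod.natCast_mod n 8).symm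
  have h4 : (n : ZMod 4) = ((n % 4 : ℕ) : ZMod 4) := (ZMod.natCast_mod n 4).symm
  unfold psi2 psim2 psim1
  constructor
  · intro h
    rw [h4, h8, h]
    have : n % 8 = 1 ∨ n % 8 = 5 := by omega
    rcases this with h | h <;> rw [h] <;> refine ⟨?_, ?_, ?_⟩ <;> norm_cast
  · intro h
    rw [h4, h8, h]
    have : n % 8 = 3 ∨ n % 8 = 7 := by omega
    rcases this with h | h <;> rw [h] <;> refine ⟨?_, ?_, ?_⟩ <;> norm_cast

lemma jacobiG_one (n k : ℕ) (h : n % 4 = 1) : jacobiG n k = jacobiTau n k := by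
  have ho : Odd n := by rw [Nat.odd_iff]; omega
  have h2 := ((chars n).1 h).2.2
  unfold psim1 at h2
  unfold jacobiG
  rw [jacobiSym.at_neg_one ho, h2]
  ring

lemma jacobiG_three (n k : ℕ) (h : n % 4 = 3) : jacobiG n k = -Complex.I * jacobiTau n k := by
  have ho : Odd n := by rw [Nat.odd_iff]; omega
  have h2 := ((chars n).2 h).2.2
  unfold psim1 at h2
  unfold jacobiG
  rw [jacobiSym.at_neg_one ho, h2]
  ring

lemma jac_norm (a : ℤ) (n : ℕ) : ‖((jacobiSym a n : ℤ) : ℂ)‖ ≤ 1 := by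
  rcases jacobiSym.trichotomy a n with h | h | h <;> rw [h] <;> simp

lemma exp_norm (x : ℝ) (y : ℂ) (h : y = x * Complex.I) : ‖Complex.exp y‖ = 1 := by
  rw [h, Complex.norm_exp_ofReal_mul_I]

lemma jacobiTau_norm (n k : ℕ) : ‖jacobiTau n k‖ ≤ n := by
  unfold jacobiTau
  refine (norm_sum_le_of_le (f := _) (Finset.range n) (n := fun _ => (1:ℝ)) ?_).trans (by simp)
  intro j _
  rw [norm_mul, exp_norm (2 * Real.pi * j * k / n) _ (by push_cast; ring), mul_one]
  exact jac_norm _ _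

lemma jacobiG_norm (n k : ℕ) (hn : Odd n) : ‖jacobiG n k‖ ≤ n := by
  have h : n % 4 = 1 ∨ n % 4 = 3 := by rw [Nat.odd_iff] at hn; omega
  rcases h with h | h
  · rw [jacobiG_one n k h]; exact jacobiTau_norm n k
  · rw [jacobiG_three n k h]; simpa using jacobiTau_norm n k

lemma tau4n_norm (n k : ℕ) (hn : Odd n) : ‖tau4n n k‖ ≤ 2 * n := by
  rw [tau4n_eq n k hn, norm_mul]
  refine mul_le_mul ?_ (jacobiTau_norm n k) (norm_nonneg _) (by norm_num)
  refine (norm_add_le _ _).trans ?_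
  simp
  norm_num

lemma psi_norms (n : ℕ) : ‖psi0 n‖ ≤ 1 ∧ ‖psi1 n‖ ≤ 1 ∧ ‖psim1 n‖ ≤ 1 ∧ ‖psi2 n‖ ≤ 1 ∧ ‖psim2 n‖ ≤ 1 := by
  refine ⟨by simp [psi0], ?_, ?_, ?_, ?_⟩
  · unfold psi1; split_ifs <;> simp
  · unfold psim1
    rcases ZMod.isQuadratic_χ₄ (n : ZMod 4) with h | h | h <;> rw [h] <;> simp
  · unfold psi2
    rcases ZMod.isQuadratic_χ₈ (n : ZMod 8) with h | h | h <;> rw [h] <;> simp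
  · unfold psim2
    rcases ZMod.isQuadratic_χ₈' (n : ZMod 8) with h | h | h <;> rw [h] <;> simp

lemma aF_bound (t : ℂ) (ht : 0 < t.re) (e : ℝ) (he : 0 < e) :
    ∃ C : ℝ, 0 ≤ C ∧ ∀ n : ℕ, n ≠ 0 → ‖aF t n‖ ≤ C * (n : ℝ) ^ e := by
  set c : ℝ := (1 - (2:ℝ) ^ (-t.re))⁻¹ with hc
  have h2 : (2:ℝ) ^ (-t.re) < 1 := Real.rpow_lt_one_of_one_lt_of_neg (by norm_num) (by linarith)
  have h2' : (0:ℝ) < (2:ℝ) ^ (-t.re) := by positivity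
  have hc1 : 1 ≤ c := (one_le_inv₀ (by linarith)).2 (by linarith)
  have hfac : ∀ p : ℕ, p.Prime → ‖(1 - (p : ℂ) ^ (-t))⁻¹‖ ≤ c := by
    intro p hp
    rw [norm_inv]
    refine inv_anti₀ (by linarith) ?_
    have h3 : ‖(p : ℂ) ^ (-t)‖ ≤ (2:ℝ) ^ (-t.re) := by
      rw [Complex.norm_natCast_cpow_of_pos hp.pos, Complex.neg_re]
      exact Real.rpow_le_rpow_of_nonpos (by norm_num) (by exact_mod_cast hp.two_le) (by linarith)
    have h4 := norm_sub_norm_le (1:ℂ) ((p : ℂ) ^ (-t))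
    rw [norm_one] at h4
    linarith
  obtain ⟨P, hP⟩ : ∃ P : ℕ, ∀ p : ℕ, P ≤ p → c ≤ (p : ℝ) ^ e := by
    have := ((tendsto_rpow_atTop he).comp tendsto_natCast_atTop_atTop).eventually_ge_atTop c
    exact Filter.eventually_atTop.1 this
  refine ⟨c ^ P, by positivity, ?_⟩
  intro n hn
  unfold aF
  rw [norm_prod]
  have hstep : ∀ p ∈ n.primeFactors, ‖(1 - (p : ℂ) ^ (-t))⁻¹‖
      ≤ (if p < P then c else 1) * (p : ℝ) ^ e := by
    intro p hp
    have hpp := Nat.prime_of_mem_primeFactors hp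
    have h1 : (1:ℝ) ≤ (p : ℝ) ^ e :=
      Real.one_le_rpow (by exact_mod_cast hpp.one_lt.le) he.le
    split_ifs with h
    · exact (hfac p hpp).trans (le_mul_of_one_le_right (by linarith) h1)
    · rw [one_mul]; exact (hfac p hpp).trans (hP p (not_lt.1 h))
  refine (Finset.prod_le_prod (fun _ _ => norm_nonneg _) hstep).trans ?_
  rw [Finset.prod_mul_distrib]
  refine mul_le_mul ?_ ?_ (Finset.prod_nonneg fun _ _ => by positivity) (by positivity)
  · rw [← Finset.prod_filter, Finset.prod_const]
    refine pow_le_pow_right₀ hc1 ?_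
    refine (Finset.card_le_card (t := Finset.range P) ?_).trans (by simp)
    intro p hp
    simp only [Finset.mem_filter] at hp
    exact Finset.mem_range.2 hp.2
  · rw [Real.finsetProd_rpow _ _ (fun _ _ => by positivity)]
    refine Real.rpow_le_rpow (Finset.prod_nonneg fun _ _ => by positivity) ?_ he.le
    have : ∏ p ∈ n.primeFactors, p ≤ n := Nat.le_of_dvd (Nat.pos_of_ne_zero hn) (Nat.prod_primeFactors_dvd n)
    rw [← Nat.cast_prod]
    exact Nat.cast_le.2 this

lemma summ_main (s w t : ℂ) (hs : 3 / 2 < s.re) (hw : 1 < w.re) (ht : 0 < t.re)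
    (P : ℕ × ℕ → Prop) [DecidablePred P] (hP : ∀ q, P q → Odd q.1 ∧ 1 ≤ q.2) (D : ℝ)
    (c : ℕ × ℕ → ℂ) (hc : ∀ q, P q → ‖c q‖ ≤ D * q.1 * ‖aF t q.1‖) :
    Summable (fun q : ℕ × ℕ => ‖(if P q then
        c q / ((q.1 : ℂ) ^ (s + 1 / 2) * (q.2 : ℂ) ^ w) else 0)‖) := by
  set e : ℝ := (s.re - 3 / 2) / 2 with he
  obtain ⟨C, hC0, hC⟩ := aF_bound t ht e (by linarith)
  have hS : Summable (fun q : ℕ × ℕ => (|D| * C) *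
      ((q.1 : ℝ) ^ (-(1 + e)) * (q.2 : ℝ) ^ (-w.re))) := by
    refine Summable.mul_left _ ?_
    refine Summable.mul_of_nonneg (f := fun n : ℕ => (n:ℝ) ^ (-(1 + e)))
      (g := fun n : ℕ => (n:ℝ) ^ (-w.re)) ?_ ?_ (fun n => by simp only [Pi.zero_apply]; positivity) (fun n => by simp only [Pi.zero_apply]; positivity)
    · exact Real.summable_nat_rpow.2 (by linarith)
    · exact Real.summable_nat_rpow.2 (by linarith)
  refine Summable.of_nonneg_of_le (fun _ => norm_nonneg _) ?_ hS
  rintro ⟨n, k⟩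
  split_ifs with h
  · obtain ⟨ho, hk⟩ := hP _ h
    have hcq := hc _ h
    simp only at ho hk hcq ⊢
    have hn : (0:ℝ) < n := by exact_mod_cast ho.pos
    have hk' : (0:ℝ) < k := by exact_mod_cast hk
    rw [norm_div, norm_mul, Complex.norm_natCast_cpow_of_pos ho.pos,
      Complex.norm_natCast_cpow_of_pos hk]
    have hre : (s + 1 / 2).re = s.re + 1 / 2 := by simp
    rw [hre, div_le_iff₀ (by positivity)]
    have e1 : (n : ℝ) ^ (-(1 + e)) * (n : ℝ) ^ (s.re + 1 / 2) = n * (n:ℝ) ^ e := by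
      rw [← Real.rpow_add hn, show -(1 + e) + (s.re + 1 / 2) = 1 + e by rw [he]; ring,
        Real.rpow_add hn, Real.rpow_one]
    have e2 : (k : ℝ) ^ (-w.re) * (k : ℝ) ^ w.re = 1 := by
      rw [← Real.rpow_add hk']; simp
    calc ‖c (n, k)‖ ≤ D * n * ‖aF t n‖ := hcq
      _ ≤ |D| * n * (C * (n:ℝ) ^ e) := by
        refine mul_le_mul ?_ (hC n ho.pos.ne') (norm_nonneg _) (by positivity)
        exact mul_le_mul_of_nonneg_right (le_abs_self D) hn.le
      _ = |D| * C * ((n : ℝ) ^ (-(1 + e)) * (n : ℝ) ^ (s.re + 1 / 2)) *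
          ((k : ℝ) ^ (-w.re) * (k : ℝ) ^ w.re) := by rw [e1, e2]; ring
      _ = _ := by ring
  · rw [norm_zero]; positivity

lemma summ_pm (s w t : ℂ) (hs : 3 / 2 < s.re) (hw : 1 < w.re) (ht : 0 < t.re) (r : ℕ)
    (hr : r = 1 ∨ r = 3) :
    Summable (fun q : ℕ × ℕ => ‖(if q.1 % 4 = r ∧ 1 ≤ q.2 then
        tau4n q.1 q.2 * aF t (4 * q.1) * psi2 q.1 / ((q.1 : ℂ) ^ (s + 1 / 2) * (q.2 : ℂ) ^ w)
      else 0)‖) := by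
  have hodd : ∀ q : ℕ × ℕ, q.1 % 4 = r ∧ 1 ≤ q.2 → Odd q.1 ∧ 1 ≤ q.2 := by
    rintro q ⟨h1, h2⟩
    refine ⟨?_, h2⟩
    rw [Nat.odd_iff]; omega
  refine summ_main s w t hs hw ht _ hodd (2 * ‖aF t 2‖) _ ?_
  intro q hq
  have ho := (hodd q hq).1
  rw [aF_four t _ ho, norm_mul, norm_mul, norm_mul]
  have h1 := tau4n_norm q.1 q.2 ho
  have h2 := (psi_norms q.1).2.2.2.1
  calc _ ≤ (2 * (q.1:ℝ)) * (‖aF t 2‖ * ‖aF t q.1‖) * 1 := by gcongr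
    _ = _ := by ring

lemma summ_gen (s w t : ℂ) (hs : 3 / 2 < s.re) (hw : 1 < w.re) (ht : 0 < t.re) (ψ ψ' : ℕ → ℂ)
    (h1 : ∀ n, ‖ψ n‖ ≤ 1) (h2 : ∀ n, ‖ψ' n‖ ≤ 1) :
      Summable (fun q : ℕ × ℕ => ‖(if Odd q.1 ∧ 1 ≤ q.2 then
        jacobiG q.1 q.2 * aF t q.1 * ψ q.1 * ψ' q.2 / ((q.1 : ℂ) ^ (s + 1 / 2) * (q.2 : ℂ) ^ w)
      else 0)‖) := by
  refine summ_main s w t hs hw ht _ (fun _ h => h) 1 _ ?_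
  intro q hq
  rw [norm_mul, norm_mul, norm_mul]
  have h3 := jacobiG_norm q.1 q.2 hq.1
  have h1 := h1 q.1
  have h2 := h2 q.2
  calc _ ≤ (q.1:ℝ) * ‖aF t q.1‖ * 1 * 1 := by gcongr
    _ = _ := by ring

lemma tsum_split (h : ℕ × ℕ → ℂ) (hh : Summable h) (h0 : ∀ n k, Odd k → h (n, k) = 0) :
    ∑' q, h q = ∑' q : ℕ × ℕ, h (q.1, 4 * q.2)
      + ∑' q : ℕ × ℕ, (if Odd q.2 then h (q.1, 2 * q.2) else 0) := by
  have i2 : Function.Injective (fun q : ℕ × ℕ => (q.1, 2 * q.2)) := by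
    rintro ⟨a, b⟩ ⟨c, d⟩ h
    simp only [Prod.mk.injEq] at h ⊢
    omega
  have e1 : ∑' q : ℕ × ℕ, h (q.1, 2 * q.2) = ∑' q, h q := by
    refine i2.tsum_eq (f := h) ?_
    rintro ⟨n, k⟩ hk
    rcases Nat.even_or_odd' k with ⟨m, rfl | rfl⟩
    · exact ⟨(n, m), rfl⟩
    · exact absurd (h0 n _ ⟨m, rfl⟩) hk
  have s2 : Summable (fun q : ℕ × ℕ => h (q.1, 2 * q.2)) := hh.comp_injective i2
  have e2 : ∑' q : ℕ × ℕ, (if Odd q.2 then 0 else h (q.1, 2 * q.2))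
      = ∑' q : ℕ × ℕ, h (q.1, 4 * q.2) := by
    rw [← i2.tsum_eq (f := fun q : ℕ × ℕ => if Odd q.2 then 0 else h (q.1, 2 * q.2))]
    · refine tsum_congr fun q => ?_
      have : ¬ Odd (2 * q.2) := by rw [Nat.not_odd_iff]; omega
      simp only [if_neg this]
      rw [← mul_assoc, show 2 * 2 = 4 from rfl]
    · rintro ⟨n, k⟩ hk
      rcases Nat.even_or_odd' k with ⟨m, rfl | rfl⟩
      · exact ⟨(n, m), rfl⟩
      · exact absurd (if_pos ⟨m, rfl⟩) hk
  have so : Summable (fun q : ℕ × ℕ => if Odd q.2 then h (q.1, 2 * q.2) else 0) := by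
    have := s2.indicator {q : ℕ × ℕ | Odd q.2}
    refine this.congr fun q => ?_
    simp [Set.indicator]
  have se : Summable (fun q : ℕ × ℕ => if Odd q.2 then 0 else h (q.1, 2 * q.2)) := by
    have := s2.sub so
    refine this.congr fun q => ?_
    by_cases hq : Odd q.2 <;> simp [hq]
  rw [← e1, ← e2, ← se.tsum_add so]
  refine tsum_congr fun q => ?_
  by_cases hq : Odd q.2 <;> simp [hq]

lemma Bpm_eq (s w t : ℂ) (hs : 3 / 2 < s.re) (hw : 1 < w.re) (ht : 0 < t.re) (r : ℕ)
    (hr : r = 1 ∨ r = 3) (ε σ : ℂ)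
    (H2 : ∀ n k, Odd n → ε * jacobiG n k * (psi2 n + σ * psim2 n) =
      if n % 4 = r then 2 * jacobiTau n k * psi2 n else 0)
    (H1 : ∀ n k, Odd n → ε * jacobiG n k * (psi1 n + σ * psim1 n) =
      if n % 4 = r then 2 * jacobiTau n k * (psi2 n * psi2 n) else 0) :
    Bpm r s w t =
      (ε * aF t 2 / (2 * (4 : ℂ) ^ w)) * (Bgen s w t psi2 psi0 + σ * Bgen s w t psim2 psi0) -
      (ε * aF t 2 / (2 * (2 : ℂ) ^ w)) * (Bgen s w t psi1 psi1 + σ * Bgen s w t psim1 psi1) := by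
  have hrodd : ∀ n : ℕ, n % 4 = r → Odd n := by
    intro n h; rw [Nat.odd_iff]; omega
  have S20 := (summ_gen s w t hs hw ht psi2 psi0 (fun n => (psi_norms n).2.2.2.1)
    (fun n => (psi_norms n).1)).of_norm
  have Sm20 := (summ_gen s w t hs hw ht psim2 psi0 (fun n => (psi_norms n).2.2.2.2)
    (fun n => (psi_norms n).1)).of_norm
  have S11 := (summ_gen s w t hs hw ht psi1 psi1 (fun n => (psi_norms n).2.1)
    (fun n => (psi_norms n).2.1)).of_norm
  have Sm11 := (summ_gen s w t hs hw ht psim1 psi1 (fun n => (psi_norms n).2.2.1)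
    (fun n => (psi_norms n).2.1)).of_norm
  have Sp := (summ_pm s w t hs hw ht r hr).of_norm
  unfold Bpm
  rw [tsum_split _ Sp (by
    intro n k hk
    split_ifs with h
    · simp only at h ⊢
      rw [tau4n_odd n k (hrodd n h.1) hk]; simp
    · rfl)]
  rw [mul_add, sub_eq_add_neg]
  congr 1
  · unfold Bgen
    rw [← tsum_mul_left (a := σ), ← S20.tsum_add (Sm20.mul_left σ), ← tsum_mul_left, ← tsum_mul_left]
    refine tsum_congr ?_
    rintro ⟨n, k⟩
    simp only
    by_cases hk : 1 ≤ k
    · by_cases ho : Odd n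
      · have H := H2 n k ho
        rw [if_pos (⟨ho, hk⟩ : Odd n ∧ 1 ≤ k), if_pos (⟨ho, hk⟩ : Odd n ∧ 1 ≤ k)]
        have hR : ∀ N W : ℂ, ε * aF t 2 / (2 * 4 ^ w) *
          (jacobiG n k * aF t n * psi2 n * psi0 k / (N * W) +
            σ * (jacobiG n k * aF t n * psim2 n * psi0 k / (N * W))) =
          (ε * jacobiG n k * (psi2 n + σ * psim2 n)) * (aF t 2 * aF t n / (2 * 4 ^ w * (N * W))) := by
          intro N W
          simp only [psi0]
          ring
        rw [hR, H]
        by_cases hn : n % 4 = r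
        · rw [if_pos hn, if_pos (⟨hn, by omega⟩ : n % 4 = r ∧ 1 ≤ 4 * k), tau4n_four n k ho,
            aF_four t n ho, Nat.cast_mul, Complex.natCast_mul_natCast_cpow]
          push_cast
          ring
        · rw [if_neg hn, if_neg (fun h => hn h.1)]
          ring
      · rw [if_neg (fun h => ho (hrodd _ h.1)), if_neg (fun h => ho h.1), if_neg (fun h => ho h.1)]
        ring
    · rw [if_neg (fun h => hk (by omega)), if_neg (fun h => hk h.2), if_neg (fun h => hk h.2)]
      ring
  · unfold Bgen
    rw [← tsum_mul_left (a := σ), ← S11.tsum_add (Sm11.mul_left σ), ← tsum_mul_left, ← tsum_mul_left,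
      ← tsum_neg]
    refine tsum_congr ?_
    rintro ⟨n, k⟩
    simp only
    by_cases hk : Odd k
    · have hk1 : 1 ≤ k := hk.pos
      rw [if_pos hk]
      by_cases ho : Odd n
      · have H := H1 n k ho
        rw [if_pos (⟨ho, hk1⟩ : Odd n ∧ 1 ≤ k), if_pos (⟨ho, hk1⟩ : Odd n ∧ 1 ≤ k)]
        have hR : ∀ N W : ℂ, ε * aF t 2 / (2 * 2 ^ w) *
          (jacobiG n k * aF t n * psi1 n * psi1 k / (N * W) +
            σ * (jacobiG n k * aF t n * psim1 n * psi1 k / (N * W))) =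
          (ε * jacobiG n k * (psi1 n + σ * psim1 n)) * (psi1 k * aF t 2 * aF t n / (2 * 2 ^ w * (N * W))) := by
          intro N W
          ring
        have hpk : psi1 k = 1 := if_pos hk
        rw [hR, H, hpk]
        by_cases hn : n % 4 = r
        · rw [if_pos hn, if_pos (⟨hn, by omega⟩ : n % 4 = r ∧ 1 ≤ 2 * k), tau4n_two n k ho hk,
            aF_four t n ho, Nat.cast_mul, Complex.natCast_mul_natCast_cpow]
          push_cast
          ring
        · rw [if_neg hn, if_neg (fun h => hn h.1)]
          ring
      · rw [if_neg (fun h => ho (hrodd _ h.1)), if_neg (fun h => ho h.1), if_neg (fun h => ho h.1)]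
        ring
    · have hpk : psi1 k = 0 := if_neg hk
      rw [if_neg hk, hpk]
      simp

/-- decomposition of `B_±(s,w;t)` into the series `B(s,w;t,ψ,ψ')` with
multiplicative coefficients. -/
theorem statement15 (s w t : ℂ) (hs : 3 / 2 < s.re) (hw : 1 < w.re) (ht : 0 < t.re) :
    (∀ r : ℕ, r = 1 ∨ r = 3 →
      Summable (fun q : ℕ × ℕ => ‖(if q.1 % 4 = r ∧ 1 ≤ q.2 then
        tau4n q.1 q.2 * aF t (4 * q.1) * psi2 q.1 / ((q.1 : ℂ) ^ (s + 1 / 2) * (q.2 : ℂ) ^ w)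
      else 0)‖)) ∧
    (∀ ψ ψ' : ℕ → ℂ,
      ((ψ = psi2 ∨ ψ = psim2) ∧ ψ' = psi0) ∨ ((ψ = psi1 ∨ ψ = psim1) ∧ ψ' = psi1) →
      Summable (fun q : ℕ × ℕ => ‖(if Odd q.1 ∧ 1 ≤ q.2 then
        jacobiG q.1 q.2 * aF t q.1 * ψ q.1 * ψ' q.2 / ((q.1 : ℂ) ^ (s + 1 / 2) * (q.2 : ℂ) ^ w)
      else 0)‖)) ∧
    Bpm 1 s w t =
      (1 * aF t 2 / (2 * (4 : ℂ) ^ w)) * (Bgen s w t psi2 psi0 + Bgen s w t psim2 psi0) -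
      (1 * aF t 2 / (2 * (2 : ℂ) ^ w)) * (Bgen s w t psi1 psi1 + Bgen s w t psim1 psi1) ∧
    Bpm 3 s w t =
      (Complex.I * aF t 2 / (2 * (4 : ℂ) ^ w)) * (Bgen s w t psi2 psi0 - Bgen s w t psim2 psi0) -
      (Complex.I * aF t 2 / (2 * (2 : ℂ) ^ w)) * (Bgen s w t psi1 psi1 - Bgen s w t psim1 psi1) := by
  refine ⟨fun r hr => summ_pm s w t hs hw ht r hr, ?_, ?_, ?_⟩
  · rintro ψ ψ' (⟨h | h, h'⟩ | ⟨h | h, h'⟩) <;> subst h <;> subst h' <;>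
      refine summ_gen s w t hs hw ht _ _ (fun n => ?_) (fun n => ?_) <;>
      have := psi_norms n <;> tauto
  · have := Bpm_eq s w t hs hw ht 1 (Or.inl rfl) 1 1 ?_ ?_
    · simpa only [one_mul] using this
    · intro n k ho
      have h : n % 4 = 1 ∨ n % 4 = 3 := by rw [Nat.odd_iff] at ho; omega
      rcases h with h | h
      · rw [if_pos h, jacobiG_one n k h, ((chars n).1 h).2.1]; ring
      · rw [if_neg (by omega), ((chars n).2 h).2.1]; ring
    · intro n k ho
      have hp : psi1 n = 1 := if_pos ho
      have h : n % 4 = 1 ∨ n % 4 = 3 := by rw [Nat.odd_iff] at ho; omega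
      rcases h with h | h
      · rw [if_pos h, jacobiG_one n k h, ((chars n).1 h).2.2, ((chars n).1 h).1, hp]; ring
      · rw [if_neg (by omega), ((chars n).2 h).2.2, hp]; ring
  · have := Bpm_eq s w t hs hw ht 3 (Or.inr rfl) Complex.I (-1) ?_ ?_
    · simpa only [neg_one_mul, ← sub_eq_add_neg] using this
    · intro n k ho
      have h : n % 4 = 1 ∨ n % 4 = 3 := by rw [Nat.odd_iff] at ho; omega
      rcases h with h | h
      · rw [if_neg (by omega), ((chars n).1 h).2.1]; ring
      · rw [if_pos h, jacobiG_three n k h, ((chars n).2 h).2.1]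
        linear_combination (-2 * jacobiTau n k * psi2 n) * Complex.I_sq
    · intro n k ho
      have hp : psi1 n = 1 := if_pos ho
      have h : n % 4 = 1 ∨ n % 4 = 3 := by rw [Nat.odd_iff] at ho; omega
      rcases h with h | h
      · rw [if_neg (by omega), ((chars n).1 h).2.2, hp]; ring
      · rw [if_pos h, jacobiG_three n k h, ((chars n).2 h).2.2, ((chars n).2 h).1, hp]
        linear_combination (-2 * jacobiTau n k) * Complex.I_sq
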